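/- Let A be a commutative ring whose underlying additive group is torsion-free, let m ≥ r ≥ 0 be integers, and let R, V_1, …, V_r ∈ A satisfy: (i) V_j² = R·V_j for all j; (ii) R^e · ∏_{j ∈ T} V_j = 0 for every subset T ⊆ {1, …, r} and every e ≥ 0 with e + |T| > m; (iii) R^{m − |T|} · ∏_{j ∈ T} V_j = 0 for every proper subset T ⊊ {1, …, r}; and (iv) R^{m − r} V_1 ⋯ V_r ≠ 0. Then there exist 2m elements y_1, …, y_{2m}, each equal to R or to one of the V_j (namely, 2m − 2r copies of R and two copies of each V_j), such that the product ∏_{i=1}^{2m} (y_i ⊗ 1 − 1 ⊗ y_i) is nonzero in A ⊗_ℤ A. -/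

import Mathlib

open scoped TensorProduct

/-!
Let `W` consist of `m - r` copies of `R` and one copy of each `V j`, and multiply out the zero
divisors of all elements of `W + W`. Each term is, up to sign, `S.prod ⊗ S'.prod` with
`S + S' = W + W`. By `V j ^ 2 = R * V j`, a product of `m` of the generators is either `0` or
`W.prod`, and longer products vanish; so a term can survive only if `S` and `S'` both have `m`
elements, and it is then `(-1) ^ m • (W.prod ⊗ W.prod)`. All surviving terms have the same sign and
`S = S' = W` is one of them, so nothing cancels.
-/

section Multiset

theorem exists_sum_eq_nsmul_of_forall_eq_zero_or_eq {M : Type*} [AddCommMonoid M]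
    {s : Multiset M} {c : M} (hc : c ∈ s) (hs : ∀ b ∈ s, b = 0 ∨ b = c) :
    ∃ N : ℕ, N ≠ 0 ∧ s.sum = N • c := by
  obtain ⟨t, rfl⟩ := Multiset.exists_cons_of_mem hc
  have ht : t.sum ∈ AddSubmonoid.multiples c := by
    refine AddSubmonoid.multiset_sum_mem _ t fun b hb => ?_
    rcases hs b (Multiset.mem_cons_of_mem hb) with rfl | rfl
    exacts [zero_mem _, AddSubmonoid.mem_multiples b]
  obtain ⟨N, hN⟩ := (AddSubmonoid.mem_multiples_iff _ _).1 ht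
  exact ⟨N + 1, N.succ_ne_zero, by rw [Multiset.sum_cons, ← hN, succ_nsmul']⟩

theorem exists_univ_val_map_eq_of_card_eq {α : Type*} {n : ℕ} {s : Multiset α}
    (hs : s.card = n) : ∃ y : Fin n → α, Finset.univ.val.map y = s := by
  obtain ⟨l, rfl⟩ : ∃ l : List α, ↑l = s := ⟨s.toList, s.coe_toList⟩
  obtain rfl : l.length = n := hs
  exact ⟨l.get, by rw [Fin.univ_val_map, List.ofFn_get]⟩

theorem replicate_two_mul_add_bind_replicate_two {α ι : Type*} (n : ℕ) (a : α) (s : Multiset ι)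
    (f : ι → α) :
    Multiset.replicate (2 * n) a + s.bind (fun j => Multiset.replicate 2 (f j)) =
      (Multiset.replicate n a + s.map f) + (Multiset.replicate n a + s.map f) := by
  have replicate_two (b : α) : Multiset.replicate 2 b = {b} + {b} := rfl
  simp only [replicate_two, Multiset.bind_add, Multiset.bind_singleton]
  rw [add_add_add_comm, ← Multiset.replicate_add, ← two_mul]

theorem prod_map_sub_eq_sum_antidiagonal {A B F G : Type*} [CommMonoid A] [CommRing B]
    [FunLike F A B] [MonoidHomClass F A B] [FunLike G A B] [MonoidHomClass G A B]
    (φ : F) (ψ : G) (s : Multiset A) :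
    (s.map fun a => φ a - ψ a).prod =
      (s.antidiagonal.map fun p => (-1) ^ p.2.card * (φ p.1.prod * ψ p.2.prod)).sum := by
  have neg_prod (S : Multiset A) : (S.map fun a => -ψ a).prod = (-1) ^ S.card * ψ S.prod := by
    rw [map_multiset_prod, ← Multiset.card_map ψ S, ← Multiset.prod_map_neg, Multiset.map_map]
    rfl
  simp_rw [sub_eq_add_neg, Multiset.prod_map_add, neg_prod, map_multiset_prod, mul_left_comm]

end Multiset

section ZeroDivisors

theorem exists_prod_map_sub_add_self_eq_nsmul {A B F G : Type*} [CommMonoidWithZero A]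
    [CommRing B] [FunLike F A B] [MonoidWithZeroHomClass F A B] [FunLike G A B]
    [MonoidWithZeroHomClass G A B] (φ : F) (ψ : G) {W : Multiset A}
    (h_gt : ∀ S ≤ W + W, W.card < S.card → S.prod = 0)
    (h_eq : ∀ S ≤ W + W, S.card = W.card → S.prod = 0 ∨ S.prod = W.prod) :
    ∃ N : ℕ, N ≠ 0 ∧ ((W + W).map fun a => φ a - ψ a).prod =
      N • ((-1) ^ W.card * (φ W.prod * ψ W.prod)) := by
  rw [prod_map_sub_eq_sum_antidiagonal]
  refine exists_sum_eq_nsmul_of_forall_eq_zero_or_eq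
    (Multiset.mem_map.2 ⟨(W, W), Multiset.mem_antidiagonal.2 rfl, rfl⟩) ?_
  simp only [Multiset.mem_map, Multiset.mem_antidiagonal]
  rintro _ ⟨⟨S, S'⟩, hSS' : S + S' = W + W, rfl⟩
  have hS : S ≤ W + W := hSS' ▸ Multiset.le_add_right S S'
  have hS' : S' ≤ W + W := hSS' ▸ Multiset.le_add_left S' S
  have hcard : S.card + S'.card = W.card + W.card := by
    simpa only [Multiset.card_add] using congrArg Multiset.card hSS'
  rcases lt_trichotomy S.card W.card with hlt | heq | hgt
  · left; simp [h_gt S' hS' (by omega)]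
  · have heq' : S'.card = W.card := by omega
    rcases h_eq S hS heq with h | h <;> rcases h_eq S' hS' heq' with h' | h' <;>
      simp [h, h', heq']
  · left; simp [h_gt S hS hgt]

-- A torsion-free module over a domain need not be flat, but its localization at the fraction field
-- is a vector space, whose functionals separate points.
theorem exists_linearMap_fractionRing_apply_ne_zero (K : Type*) {M : Type*} [CommRing K]
    [IsDomain K] [AddCommGroup M] [Module K M] [Module.IsTorsionFree K M] {x : M} (hx : x ≠ 0) :
    ∃ f : M →ₗ[K] FractionRing K, f x ≠ 0 := by
  let loc : M →ₗ[K] LocalizedModule (nonZeroDivisors K) M := LocalizedModule.mkLinearMap _ M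
  have loc_injective : Function.Injective loc :=
    (IsLocalizedModule.injective_iff_isRegular (nonZeroDivisors K) loc).2 fun c =>
      Module.IsTorsionFree.isSMulRegular (isRegular_iff_ne_zero.2 (nonZeroDivisors.coe_ne_zero c))
  have loc_x_ne_zero : loc x ≠ 0 := (map_ne_zero_iff loc loc_injective).2 hx
  obtain ⟨f, hf⟩ := Module.Projective.exists_dual_ne_zero (FractionRing K) loc_x_ne_zero
  exact ⟨f.restrictScalars K ∘ₗ loc, hf⟩

theorem tmul_ne_zero_of_isTorsionFree (K : Type*) {M N : Type*} [CommRing K] [IsDomain K]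
    [AddCommGroup M] [Module K M] [Module.IsTorsionFree K M]
    [AddCommGroup N] [Module K N] [Module.IsTorsionFree K N]
    {x : M} {y : N} (hx : x ≠ 0) (hy : y ≠ 0) : x ⊗ₜ[K] y ≠ 0 := by
  obtain ⟨f, hf⟩ := exists_linearMap_fractionRing_apply_ne_zero K hx
  obtain ⟨g, hg⟩ := exists_linearMap_fractionRing_apply_ne_zero K hy
  intro h
  have : f x * g y = 0 := by
    simpa using congrArg (LinearMap.mul' K (FractionRing K) ∘ₗ TensorProduct.map f g) h
  exact mul_ne_zero hf hg this

theorem prod_map_tmul_sub_tmul_add_self_ne_zero (K : Type*) {A : Type*} [CommRing K] [IsDomain K]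
    [CharZero K] [CommRing A] [Algebra K A] [Module.IsTorsionFree K A] {W : Multiset A}
    (h_gt : ∀ S ≤ W + W, W.card < S.card → S.prod = 0)
    (h_eq : ∀ S ≤ W + W, S.card = W.card → S.prod = 0 ∨ S.prod = W.prod)
    (hW : W.prod ≠ 0) :
    ((W + W).map fun a => a ⊗ₜ[K] (1 : A) - (1 : A) ⊗ₜ[K] a).prod ≠ 0 := by
  obtain ⟨N, hN, hprod⟩ := exists_prod_map_sub_add_self_eq_nsmul
    (Algebra.TensorProduct.includeLeft : A →ₐ[K] A ⊗[K] A)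
    (Algebra.TensorProduct.includeRight : A →ₐ[K] A ⊗[K] A) h_gt h_eq
  simp only [Algebra.TensorProduct.includeLeft_apply, Algebra.TensorProduct.includeRight_apply,
    Algebra.TensorProduct.tmul_mul_tmul, mul_one, one_mul] at hprod
  rw [hprod, ← mul_smul_comm, Ne, neg_one_pow_mul_eq_zero_iff, ← Nat.cast_smul_eq_nsmul K,
    TensorProduct.smul_tmul']
  exact tmul_ne_zero_of_isTorsionFree K (smul_ne_zero (Nat.cast_ne_zero.2 hN) hW) hW

end ZeroDivisors

section SquareRelation

variable {A ι : Type*} {R : A} {V : ι → A}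

theorem exists_prod_eq_pow_mul_prod [CommMonoid A] (hV : ∀ j, V j ^ 2 = R * V j)
    {S : Multiset A} (hS : ∀ a ∈ S, a = R ∨ ∃ j, a = V j) :
    ∃ (e : ℕ) (T : Finset ι), e + T.card = S.card ∧ S.prod = R ^ e * ∏ j ∈ T, V j := by
  classical
  induction S using Multiset.induction_on with
  | empty => exact ⟨0, ∅, by simp⟩
  | cons a S ih =>
    obtain ⟨e, T, hcard, hprod⟩ := ih fun b hb => hS b (Multiset.mem_cons_of_mem hb)
    rw [Multiset.card_cons, Multiset.prod_cons, hprod, ← hcard]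
    rcases hS a (Multiset.mem_cons_self a S) with rfl | ⟨j, rfl⟩
    · exact ⟨e + 1, T, by omega, by rw [pow_succ', mul_assoc]⟩
    by_cases hj : j ∈ T
    · have absorb : V j * ∏ i ∈ T, V i = R * ∏ i ∈ T, V i := by
        rw [← Finset.mul_prod_erase T V hj, ← mul_assoc, ← sq, hV, mul_assoc]
      exact ⟨e + 1, T, by omega, by rw [mul_left_comm, absorb, ← mul_assoc, ← pow_succ]⟩
    · exact ⟨e, insert j T, by rw [Finset.card_insert_of_notMem hj]; omega,
        by rw [Finset.prod_insert hj, mul_left_comm]⟩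

theorem prod_eq_zero_of_lt_card [CommMonoidWithZero A] {m : ℕ} (hV : ∀ j, V j ^ 2 = R * V j)
    (h_gt : ∀ (T : Finset ι) (e : ℕ), m < e + T.card → R ^ e * ∏ j ∈ T, V j = 0)
    {S : Multiset A} (hS : ∀ a ∈ S, a = R ∨ ∃ j, a = V j) (hm : m < S.card) : S.prod = 0 := by
  obtain ⟨e, T, hcard, hprod⟩ := exists_prod_eq_pow_mul_prod hV hS
  rw [hprod, h_gt T e (hcard ▸ hm)]

theorem prod_eq_zero_or_eq_of_card_eq [CommMonoidWithZero A] [Fintype ι] {m : ℕ}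
    (hV : ∀ j, V j ^ 2 = R * V j)
    (h_proper : ∀ T : Finset ι, T ≠ Finset.univ → R ^ (m - T.card) * ∏ j ∈ T, V j = 0)
    {S : Multiset A} (hS : ∀ a ∈ S, a = R ∨ ∃ j, a = V j) (hm : S.card = m) :
    S.prod = 0 ∨ S.prod = R ^ (m - Fintype.card ι) * ∏ j, V j := by
  obtain ⟨e, T, hcard, hprod⟩ := exists_prod_eq_pow_mul_prod hV hS
  obtain rfl : e = m - T.card := by omega
  rw [hprod]
  by_cases hT : T = Finset.univ
  · right; rw [hT, Finset.card_univ]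
  · left; exact h_proper T hT

end SquareRelation

theorem exists_nonzero_zero_divisor_product_general (K : Type*) {A ι : Type*} [CommRing K]
    [IsDomain K] [CharZero K] [CommRing A] [Algebra K A] [Module.IsTorsionFree K A] [Fintype ι]
    (m : ℕ) (R : A) (V : ι → A) (h_sq : ∀ j, V j ^ 2 = R * V j)
    (h_gt : ∀ (T : Finset ι) (e : ℕ), m < e + T.card → R ^ e * ∏ j ∈ T, V j = 0)
    (h_proper : ∀ T : Finset ι, T ≠ Finset.univ → R ^ (m - T.card) * ∏ j ∈ T, V j = 0)
    (h_top : R ^ (m - Fintype.card ι) * ∏ j, V j ≠ 0) :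
    ∃ y : Fin (2 * m) → A,
      (∀ i, y i = R ∨ ∃ j, y i = V j) ∧
      (Finset.univ.val.map y =
        Multiset.replicate (2 * m - 2 * Fintype.card ι) R +
          (Finset.univ.val : Multiset ι).bind fun j => Multiset.replicate 2 (V j)) ∧
      ∏ i, (y i ⊗ₜ[K] (1 : A) - (1 : A) ⊗ₜ[K] y i) ≠ 0 := by
  have hcard : Fintype.card ι ≤ m := by
    by_contra! hlt
    exact h_top (h_gt Finset.univ _ (by rw [Finset.card_univ]; omega))
  let W : Multiset A := Multiset.replicate (m - Fintype.card ι) R + Finset.univ.val.map V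
  have W_card : W.card = m := by simp [W, hcard]
  have W_prod : W.prod = R ^ (m - Fintype.card ι) * ∏ j, V j := by simp [W]
  have WW_mem : ∀ a ∈ W + W, a = R ∨ ∃ j, a = V j := by
    intro a ha
    obtain ha | ha := Multiset.mem_add.1 (or_self_iff.1 (Multiset.mem_add.1 ha))
    · exact Or.inl (Multiset.eq_of_mem_replicate ha)
    · obtain ⟨j, -, rfl⟩ := Multiset.mem_map.1 ha
      exact Or.inr ⟨j, rfl⟩
  obtain ⟨y, hy⟩ := exists_univ_val_map_eq_of_card_eq (s := W + W) (n := 2 * m)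
    (by rw [Multiset.card_add, W_card, two_mul])
  refine ⟨y, fun i => WW_mem _ (hy ▸ Multiset.mem_map_of_mem y (Finset.mem_univ i)),
    by rw [hy, ← Nat.mul_sub, replicate_two_mul_add_bind_replicate_two], ?_⟩
  have key : ((W + W).map fun a => a ⊗ₜ[K] (1 : A) - (1 : A) ⊗ₜ[K] a).prod ≠ 0 :=
    prod_map_tmul_sub_tmul_add_self_ne_zero K
      (fun S hS hlt => prod_eq_zero_of_lt_card h_sq h_gt
        (fun a ha => WW_mem a (Multiset.mem_of_le hS ha)) (W_card ▸ hlt))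
      (fun S hS heq => W_prod ▸ prod_eq_zero_or_eq_of_card_eq h_sq h_proper
        (fun a ha => WW_mem a (Multiset.mem_of_le hS ha)) (heq.trans W_card))
      (W_prod ▸ h_top)
  rwa [← hy, Multiset.map_map] at key

/-- Let `A` be a commutative ring whose additive group is torsion-free,
`m ≥ r ≥ 0`, and `R, V 1, …, V r ∈ A` satisfy (i) `V j ^ 2 = R * V j`, (ii) products
of total degree exceeding `m` vanish, (iii) `R ^ (m − |T|) * ∏_{j ∈ T} V j = 0` for
proper subsets `T`, and (iv) `R ^ (m − r) * V 1 ⋯ V r ≠ 0`. Then there are `2m`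
elements `y i`, each equal to `R` or to some `V j` — namely `2m − 2r` copies of `R`
and two copies of each `V j` — with `∏ i (y i ⊗ 1 − 1 ⊗ y i) ≠ 0` in `A ⊗_ℤ A`. -/
theorem exists_nonzero_zero_divisor_product (A : Type*) [CommRing A]
    (htf : ∀ (k : ℕ) (a : A), k ≠ 0 → (k : ℤ) • a = 0 → a = 0)
    (m r : ℕ) (hrm : r ≤ m) (R : A) (V : Fin r → A)
    (h1 : ∀ j, V j ^ 2 = R * V j)
    (h2 : ∀ (T : Finset (Fin r)) (e : ℕ), m < e + T.card →
      R ^ e * ∏ j ∈ T, V j = 0)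
    (h3 : ∀ T : Finset (Fin r), T ≠ Finset.univ →
      R ^ (m - T.card) * ∏ j ∈ T, V j = 0)
    (h4 : R ^ (m - r) * ∏ j, V j ≠ 0) :
    ∃ y : Fin (2 * m) → A,
      (∀ i, y i = R ∨ ∃ j, y i = V j) ∧
      (Finset.univ.val.map y =
        Multiset.replicate (2 * m - 2 * r) R +
          (Finset.univ.val : Multiset (Fin r)).bind fun j => Multiset.replicate 2 (V j)) ∧
      ∏ i, (y i ⊗ₜ[ℤ] (1 : A) - (1 : A) ⊗ₜ[ℤ] y i) ≠ 0 := by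
  have : IsAddTorsionFree A := ⟨fun k hk a b hab =>
    sub_eq_zero.1 (htf k (a - b) hk (by simpa [smul_sub, sub_eq_zero] using hab))⟩
  simpa using exists_nonzero_zero_divisor_product_general ℤ m R V h1 h2 h3 (by simpa using h4)
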